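/- arXiv:2111.04387 — 2 statements merged into one kernel-verified Lean document; each statement's English description precedes it below -/
import Mathlib

section
/- Let m ≥ 3 be an odd integer and let t ≥ 3 be an odd integer such that 2m^t − 1 is a square-free integer. Then every prime p dividing t divides the class number of ℚ(√(1 − 2m^t)). In particular, if in addition t is square-free, then t divides the class number of ℚ(√(1 − 2m^t)). -/
open Polynomial NumberField

/-- A fixed choice of complex square root of the integer `d`. -/
noncomputable def sqrtC (d : ℤ) : ℂ := (d : ℂ) ^ ((1 : ℂ) / 2)

lemma sqrtC_sq (d : ℤ) : sqrtC d ^ 2 = (d : ℂ) := by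
  unfold sqrtC
  rcases eq_or_ne (d : ℂ) 0 with h | h
  · rw [h, Complex.zero_cpow (by norm_num : (1 : ℂ) / 2 ≠ 0)]
    simp
  · rw [pow_two, ← Complex.cpow_add _ _ h]
    norm_num

lemma isIntegral_sqrtC (d : ℤ) : IsIntegral ℚ (sqrtC d) := by
  refine ⟨X ^ 2 - C (d : ℚ), monic_X_pow_sub_C _ two_ne_zero, ?_⟩
  have : (Polynomial.aeval (sqrtC d)) (X ^ 2 - C (d : ℚ)) = 0 := by
    simp [sqrtC_sq]
  simpa [Polynomial.aeval_def] using this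

/-- The (number) field `ℚ(√d)`, realized as a subfield of `ℂ`. -/
noncomputable def Qsqrt (d : ℤ) : IntermediateField ℚ ℂ :=
  IntermediateField.adjoin ℚ {sqrtC d}

instance (d : ℤ) : FiniteDimensional ℚ (Qsqrt d) :=
  IntermediateField.adjoin.finiteDimensional (isIntegral_sqrtC d)

instance (d : ℤ) : NumberField (Qsqrt d) := ⟨⟩

lemma sqrtC_re (d : ℤ) (hd : d < 0) : (sqrtC d).re = 0 := by
  have h := sqrtC_sq d
  have h1 := congrArg Complex.re h
  have h2 := congrArg Complex.im h
  simp [pow_two] at h1 h2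
  have hd' : (d : ℝ) < 0 := by exact_mod_cast hd
  rcases (by rcases mul_eq_zero.mp (by linarith : (sqrtC d).re * (sqrtC d).im = 0) with h | h
             · exact Or.inl h
             · exact Or.inr h : (sqrtC d).re = 0 ∨ (sqrtC d).im = 0) with h | h
  · exact h
  · rw [h] at h1
    nlinarith [mul_self_nonneg (sqrtC d).re]

lemma sqrtC_im_sq (d : ℤ) (hd : d < 0) : (sqrtC d).im ^ 2 = -(d : ℝ) := by
  have h1 := congrArg Complex.re (sqrtC_sq d)
  have h2 := sqrtC_re d hd
  simp [pow_two, h2] at h1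
  linarith

lemma sqrtC_im_ne (d : ℤ) (hd : d < 0) : (sqrtC d).im ≠ 0 := by
  intro h
  have h1 := sqrtC_im_sq d hd
  have hd' : (d : ℝ) < 0 := by exact_mod_cast hd
  rw [h] at h1
  linarith

lemma coords_inj (d : ℤ) (hd : d < 0) (a b a' b' : ℤ)
    (h : (a : ℂ) + b * sqrtC d = a' + b' * sqrtC d) : a = a' ∧ b = b' := by
  have h1 := congrArg Complex.re h
  have h2 := congrArg Complex.im h
  have h3 := sqrtC_re d hd
  simp [h3, sqrtC_im_ne d hd] at h1 h2
  exact ⟨h1, h2⟩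

lemma normSq_coords (d : ℤ) (hd : d < 0) (a b : ℤ) :
    Complex.normSq ((a : ℂ) + b * sqrtC d) = ((a ^ 2 - d * b ^ 2 : ℤ) : ℝ) := by
  have h1 := sqrtC_im_sq d hd
  have h3 := sqrtC_re d hd
  simp [Complex.normSq_apply, h3]
  linear_combination (b : ℝ) ^ 2 * h1

lemma mem_Qsqrt (d : ℤ) (z : ℂ) (hz : z ∈ Qsqrt d) : ∃ x y : ℚ, z = x + y * sqrtC d := by
  have hz' : z ∈ Algebra.adjoin ℚ {sqrtC d} := by
    rw [← IntermediateField.adjoin_simple_toSubalgebra_of_isAlgebraic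
      (isIntegral_sqrtC d).isAlgebraic]
    exact hz
  clear hz
  induction hz' using Algebra.adjoin_induction with
  | mem x hx => exact ⟨0, 1, by simpa using hx⟩
  | algebraMap r => exact ⟨r, 0, by simp⟩
  | add x y _ _ h1 h2 =>
    obtain ⟨a, b, rfl⟩ := h1
    obtain ⟨a', b', rfl⟩ := h2
    exact ⟨a + a', b + b', by push_cast; ring⟩
  | mul x y _ _ h1 h2 =>
    obtain ⟨a, b, rfl⟩ := h1
    obtain ⟨a', b', rfl⟩ := h2
    exact ⟨a * a' + b * b' * d, a * b' + a' * b, by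
      push_cast; linear_combination (b * b' : ℂ) * sqrtC_sq d⟩

lemma rat_int_of_isIntegral (q : ℚ) (h : IsIntegral ℤ (q : ℂ)) : ∃ n : ℤ, q = n := by
  have h' : IsIntegral ℤ q := by
    have : IsIntegral ℤ (algebraMap ℚ ℂ q) := by simpa using h
    exact (isIntegral_algebraMap_iff (algebraMap ℚ ℂ).injective).mp this
  obtain ⟨n, hn⟩ := IsIntegrallyClosed.isIntegral_iff.mp h'
  exact ⟨n, by simpa using hn.symm⟩

lemma rat_int_of_sf (d : ℤ) (hsf : Squarefree d) (q : ℚ) (n : ℤ) (h : (d : ℚ) * q ^ 2 = n) :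
    ∃ k : ℤ, q = k := by
  have hden : (q.den : ℚ) ≠ 0 := by exact_mod_cast q.den_nz
  have hq : q * q.den = q.num := Rat.mul_den_eq_num q
  have h1 : d * q.num ^ 2 = n * (q.den : ℤ) ^ 2 := by
    have : (d : ℚ) * q.num ^ 2 = n * (q.den : ℚ) ^ 2 := by
      rw [← hq, ← h]; ring
    exact_mod_cast this
  have hc : IsCoprime ((q.den : ℤ) ^ 2) (q.num ^ 2) := by
    apply IsCoprime.pow
    rw [Int.isCoprime_iff_gcd_eq_one, Int.gcd_comm]
    exact q.reduced
  have h2 : (q.den : ℤ) ^ 2 ∣ d := hc.dvd_of_dvd_mul_right (Dvd.intro_left n h1.symm)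
  have h3 := hsf (q.den : ℤ) (by rwa [← pow_two])
  have h4 : q.den = 1 := by
    have := Int.isUnit_iff.mp h3
    omega
  exact ⟨q.num, (Rat.den_eq_one_iff q).mp h4 |>.symm⟩

lemma integral_coords (d : ℤ) (hd : d < 0) (hsf : Squarefree d) (hd4 : d % 4 = 3) (z : ℂ)
    (hz : z ∈ Qsqrt d) (hi : IsIntegral ℤ z) : ∃ a b : ℤ, z = a + b * sqrtC d := by
  obtain ⟨x, y, rfl⟩ := mem_Qsqrt d z hz
  have hconj : (starRingEnd ℂ) (sqrtC d) = - sqrtC d := by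
    apply Complex.ext <;> simp [sqrtC_re d hd]
  set z : ℂ := (x : ℂ) + y * sqrtC d with hzdef
  have hc : IsIntegral ℤ ((starRingEnd ℂ) z) := hi.map (starRingEnd ℂ).toIntAlgHom
  have hcz : (starRingEnd ℂ) z = x - y * sqrtC d := by
    simp [hzdef, hconj]; ring
  have hw := sqrtC_sq d
  obtain ⟨X, hX⟩ := rat_int_of_isIntegral (2 * x) (by
    have := hi.add hc
    rw [hcz] at this
    have he : ((2 * x : ℚ) : ℂ) = z + (x - y * sqrtC d) := by
      rw [hzdef]; push_cast; ring
    rw [he]; exact this)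
  obtain ⟨N, hN⟩ := rat_int_of_isIntegral (x ^ 2 - d * y ^ 2) (by
    have := hi.mul hc
    rw [hcz] at this
    have he : ((x ^ 2 - d * y ^ 2 : ℚ) : ℂ) = z * (x - y * sqrtC d) := by
      rw [hzdef]; push_cast; linear_combination (y : ℂ) ^ 2 * hw
    rw [he]; exact this)
  obtain ⟨Y, hY⟩ := rat_int_of_sf d hsf (2 * y) (X ^ 2 - 4 * N) (by
    push_cast; rw [← hX, ← hN]; ring)
  have h4 : X ^ 2 - d * Y ^ 2 = 4 * N := by
    have : (X : ℚ) ^ 2 - d * Y ^ 2 = 4 * N := by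
      rw [← hX, ← hN, ← hY]; ring
    exact_mod_cast this
  have h5 : X % 2 = 0 ∧ Y % 2 = 0 := by
    obtain ⟨e, he⟩ : ∃ e, d = 4 * e + 3 := ⟨d / 4, by omega⟩
    have h6 : X ^ 2 + Y ^ 2 = 4 * (N + e * Y ^ 2 + Y ^ 2) := by
      rw [he] at h4; linarith
    rcases Int.even_or_odd' X with ⟨k, rfl | rfl⟩ <;> rcases Int.even_or_odd' Y with ⟨l, rfl | rfl⟩
    · omega
    all_goals (exfalso; ring_nf at h6; omega)
  obtain ⟨⟨a, ha⟩, ⟨b, hb⟩⟩ : (∃ a, X = 2 * a) ∧ (∃ b, Y = 2 * b) :=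
    ⟨⟨X / 2, by omega⟩, ⟨Y / 2, by omega⟩⟩
  refine ⟨a, b, ?_⟩
  have hxa : x = a := by subst ha; push_cast at hX; linarith
  have hyb : y = b := by subst hb; push_cast at hY; linarith
  rw [hzdef, hxa, hyb]; push_cast; rfl

lemma pow_coords (d : ℤ) (a b : ℤ) (n : ℕ) :
    ∃ A B : ℤ, ((a : ℂ) + b * sqrtC d) ^ n = A + B * sqrtC d ∧ b ∣ B := by
  induction n with
  | zero => exact ⟨1, 0, by simp, by simp⟩
  | succ n ih =>
    obtain ⟨A, B, h, c, rfl⟩ := ih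
    refine ⟨A * a + b * c * b * d, b * (A + c * a), ?_, by simp⟩
    rw [pow_succ, h]
    push_cast
    linear_combination (b * c * b : ℂ) * sqrtC_sq d

lemma unit_coords (d : ℤ) (hd : d < -1) (a b a' b' : ℤ)
    (h : ((a : ℂ) + b * sqrtC d) * (a' + b' * sqrtC d) = 1) : b = 0 ∧ (a = 1 ∨ a = -1) := by
  have h1 := congrArg Complex.normSq h
  rw [map_mul, normSq_coords d (by linarith), normSq_coords d (by linarith), map_one] at h1
  have h2 : (a ^ 2 - d * b ^ 2) * (a' ^ 2 - d * b' ^ 2) = 1 := by exact_mod_cast h1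
  have h3 : a ^ 2 - d * b ^ 2 = 1 :=
    Int.eq_one_of_mul_eq_one_right (by nlinarith [sq_nonneg a, sq_nonneg b]) h2
  have hb : b = 0 := by
    by_contra hb
    have : 0 < b ^ 2 := by positivity
    nlinarith [sq_nonneg a]
  subst hb
  exact ⟨rfl, by simpa using h3⟩

lemma not_principal_arith (M : ℤ) (hM : 3 ≤ M) (p : ℕ) (hp : 3 ≤ p) (a b u v u' v' : ℤ)
    (hu : ((u : ℂ) + v * sqrtC (1 - 2 * M)) * (u' + v' * sqrtC (1 - 2 * M)) = 1)
    (h : ((a : ℂ) + b * sqrtC (1 - 2 * M)) ^ p * (u + v * sqrtC (1 - 2 * M)) =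
      ((1 - M : ℤ) : ℂ) + (1 : ℤ) * sqrtC (1 - 2 * M)) : False := by
  have hd : (1 - 2 * M) < -1 := by linarith
  have hd0 : (1 - 2 * M) < 0 := by linarith
  obtain ⟨rfl, hu1⟩ := unit_coords _ hd _ _ _ _ hu
  obtain ⟨A, B, hAB, hbB⟩ := pow_coords (1 - 2 * M) a b p
  have hn := congrArg Complex.normSq h
  rw [map_mul, map_pow, normSq_coords _ hd0, normSq_coords _ hd0, normSq_coords _ hd0] at hn
  have hn' : (a ^ 2 - (1 - 2 * M) * b ^ 2) ^ p * (u ^ 2 - (1 - 2 * M) * 0 ^ 2)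
    = (1 - M) ^ 2 - (1 - 2 * M) * 1 ^ 2 := by exact_mod_cast hn
  rw [hAB] at h
  have h' : ((A * u : ℤ) : ℂ) + (B * u : ℤ) * sqrtC (1 - 2 * M) =
      ((1 - M : ℤ) : ℂ) + (1 : ℤ) * sqrtC (1 - 2 * M) := by
    rw [← h]; push_cast; ring
  have h2 := (coords_inj _ hd0 _ _ _ _ h').2
  have hb : IsUnit b := isUnit_of_dvd_one (hbB.trans (Dvd.intro _ h2))
  have hb2 : b ^ 2 = 1 := by rcases Int.isUnit_iff.mp hb with rfl | rfl <;> norm_num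
  have hu2 : u ^ 2 = 1 := by rcases hu1 with rfl | rfl <;> norm_num
  rw [hb2, hu2] at hn'
  have h5 : (a ^ 2 - (1 - 2 * M) * 1) ^ p = M ^ 2 := by linarith
  have h6 : M ≤ a ^ 2 - (1 - 2 * M) * 1 := by nlinarith [sq_nonneg a]
  have h7 : M ^ p ≤ (a ^ 2 - (1 - 2 * M) * 1) ^ p := pow_le_pow_left₀ (by linarith) h6 p
  have h8 : M ^ 2 < M ^ p := pow_lt_pow_right₀ (by linarith) (by omega)
  linarith

lemma prime_dvd (m : ℤ) (hm : 3 ≤ m) (hmodd : Odd m)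
    (t : ℕ) (ht3 : 3 ≤ t) (htodd : Odd t)
    (hsf : Squarefree (2 * m ^ t - 1)) (p : ℕ) (hp : p.Prime) (hpt : p ∣ t) :
    p ∣ NumberField.classNumber (Qsqrt (1 - 2 * m ^ t)) := by
  have hM : 3 ≤ m ^ t := hm.trans (le_self_pow₀ (by linarith) (by omega))
  have hMo : Odd (m ^ t) := hmodd.pow
  have hp3 : 3 ≤ p := by
    have := hp.two_le
    have : p ≠ 2 := by
      rintro rfl
      exact (Nat.not_even_iff_odd.mpr htodd) (even_iff_two_dvd.mpr hpt)
    omega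
  obtain ⟨s, hs⟩ := hpt
  have hMs : m ^ t = (m ^ s) ^ p := by rw [hs, mul_comm, pow_mul]
  generalize m ^ s = r at hMs
  generalize m ^ t = M at *
  set d : ℤ := 1 - 2 * M with hdd
  have hd0 : d < 0 := by linarith
  have hd4 : d % 4 = 3 := by obtain ⟨k, rfl⟩ := hMo; omega
  have hsfd : Squarefree d := by
    have : d = -(2 * M - 1) := by rw [hdd]; ring
    rw [this]; exact hsf.squarefree_of_dvd (neg_dvd.mpr dvd_rfl)
  let K := Qsqrt d
  have hmem : sqrtC d ∈ Qsqrt d := IntermediateField.mem_adjoin_simple_self ℚ _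
  let wK : K := ⟨sqrtC d, hmem⟩
  have hwK : wK ^ 2 = (d : K) := by
    apply Subtype.ext
    simpa [wK] using sqrtC_sq d
  have hwi : IsIntegral ℤ wK := by
    refine IsIntegral.of_pow (n := 2) (by norm_num) ?_
    rw [hwK]
    exact isIntegral_algebraMap (R := ℤ) (x := d)
  let w : 𝓞 K := ⟨wK, hwi⟩
  have hw : w ^ 2 = (d : 𝓞 K) := by
    apply RingOfIntegers.coe_injective
    rw [map_pow, map_intCast]
    exact hwK
  let φ : 𝓞 K →+* ℂ := (algebraMap K ℂ).comp (algebraMap (𝓞 K) K)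
  have hφinj : Function.Injective φ :=
    (algebraMap K ℂ).injective.comp RingOfIntegers.coe_injective
  have hφw : φ w = sqrtC d := rfl
  have hcoord : ∀ x : 𝓞 K, ∃ a b : ℤ, φ x = a + b * sqrtC d := by
    intro x
    refine integral_coords d hd0 hsfd hd4 _ (x : K).2 ?_
    exact (RingOfIntegers.isIntegral x).map φ.toIntAlgHom
  let α : 𝓞 K := (1 - M : ℤ) + w
  let β : 𝓞 K := (1 - M : ℤ) - w
  have hφα : φ α = ((1 - M : ℤ) : ℂ) + (1 : ℤ) * sqrtC d := by
    simp only [α, map_add, map_intCast, hφw]; simp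
  have hαβ : α * β = ((r ^ 2 : ℤ) : 𝓞 K) ^ p := by
    have : ((r ^ 2 : ℤ) : 𝓞 K) ^ p = ((M ^ 2 : ℤ) : 𝓞 K) := by
      rw [hMs]; push_cast; ring
    rw [this]
    simp only [α, β, hdd] at hw ⊢
    push_cast at hw ⊢
    linear_combination -hw
  have hcop : IsCoprime α β := by
    have : IsCoprime (M ^ 2) (2 * (1 - M)) := by
      apply IsCoprime.pow_left
      apply IsCoprime.mul_right
      · obtain ⟨k, hk⟩ := hMo
        exact ⟨1, -k, by rw [hk]; ring⟩
      · exact ⟨1, 1, by ring⟩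
    obtain ⟨u, v, huv⟩ := this
    have huv' : (u : 𝓞 K) * M ^ 2 + v * (2 * (1 - M)) = 1 := by exact_mod_cast congrArg (Int.cast : ℤ → 𝓞 K) huv
    refine ⟨u * β + v, v, ?_⟩
    have h1 : α * β = (M : 𝓞 K) ^ 2 := by rw [hαβ, hMs]; push_cast; ring
    have h2 : α + β = 2 * (1 - M) := by simp only [α, β]; push_cast; ring
    linear_combination huv' + (u : 𝓞 K) * h1 + (v : 𝓞 K) * h2
  have hα0 : α ≠ 0 := by
    intro h
    have h1 : ((0 : ℤ) : ℂ) + (0 : ℤ) * sqrtC d = ((1 - M : ℤ) : ℂ) + (1 : ℤ) * sqrtC d := by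
      rw [← hφα, h]; simp
    have := (coords_inj d hd0 _ _ _ _ h1).2
    omega
  have hideal : Ideal.span {α} * Ideal.span {β} = (Ideal.span {((r ^ 2 : ℤ) : 𝓞 K)}) ^ p := by
    rw [Ideal.span_singleton_mul_span_singleton, Ideal.span_singleton_pow, hαβ]
  obtain ⟨C, hC⟩ : ∃ C : Ideal (𝓞 K), Ideal.span {α} = C ^ p :=
    exists_eq_pow_of_mul_eq_pow_of_coprime
      ((Ideal.isCoprime_span_singleton_iff _ _).mpr hcop) hideal
  have hC0 : C ≠ 0 := by
    rintro rfl
    rw [zero_pow hp.ne_zero] at hC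
    exact hα0 (Ideal.span_singleton_eq_bot.mp hC)
  have hC0' : C ∈ nonZeroDivisors (Ideal (𝓞 K)) := mem_nonZeroDivisors_of_ne_zero hC0
  have hne : ClassGroup.mk0 ⟨C, hC0'⟩ ≠ 1 := by
    rw [Ne, ClassGroup.mk0_eq_one_iff]
    rintro ⟨γ, hγ⟩
    rw [hγ, Ideal.submodule_span_eq, Ideal.span_singleton_pow,
      Ideal.span_singleton_eq_span_singleton] at hC
    obtain ⟨u, hu⟩ := hC.symm
    obtain ⟨a, b, hab⟩ := hcoord γ
    obtain ⟨u1, v1, h1⟩ := hcoord (u : 𝓞 K)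
    obtain ⟨u2, v2, h2⟩ := hcoord ((u⁻¹ : (𝓞 K)ˣ) : 𝓞 K)
    refine not_principal_arith M hM p hp3 a b u1 v1 u2 v2 ?_ ?_
    · rw [← hdd, ← h1, ← h2, ← map_mul]; simp
    · rw [← hdd, ← h1, ← hab, ← map_pow, ← map_mul, hu, hφα]
  have hpow : ClassGroup.mk0 ⟨C, hC0'⟩ ^ p = 1 := by
    rw [← map_pow, ClassGroup.mk0_eq_one_iff]
    exact ⟨α, by simpa using hC.symm⟩
  have : Fact p.Prime := ⟨hp⟩
  have hord := orderOf_eq_prime hpow hne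
  rw [NumberField.classNumber, ← hord]
  exact orderOf_dvd_card

/-- If `m ≥ 3` and `t ≥ 3` are odd integers and `2 m ^ t - 1` is square-free, then every prime
`p ∣ t` divides the class number of `ℚ(√(1 - 2 m ^ t))`; in particular if moreover `t` is
square-free then `t` divides this class number. -/
theorem dvd_classNumber_of_squarefree_t
    (m : ℤ) (hm : 3 ≤ m) (hmodd : Odd m)
    (t : ℕ) (ht3 : 3 ≤ t) (htodd : Odd t)
    (hsf : Squarefree (2 * m ^ t - 1)) :
    (∀ p : ℕ, p.Prime → p ∣ t →
      p ∣ NumberField.classNumber (Qsqrt (1 - 2 * m ^ t))) ∧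
    (Squarefree t → t ∣ NumberField.classNumber (Qsqrt (1 - 2 * m ^ t))) := by
  have h := prime_dvd m hm hmodd t ht3 htodd hsf
  refine ⟨h, fun hs => ?_⟩
  have h0 : ∏ p ∈ t.primeFactors, p = t := Nat.prod_primeFactors_of_squarefree hs
  refine h0.symm.dvd.trans ?_
  refine Finset.prod_primes_dvd _ (fun p hp => (Nat.prime_of_mem_primeFactors hp).prime)
    (fun p hp => h p (Nat.prime_of_mem_primeFactors hp) (Nat.dvd_of_mem_primeFactors hp))
end

section
/- Let m ≥ 3 be an odd integer and let p be an odd prime. If neither 2^{(p−1)/2}·(1 + √(1 − 2m^p)) nor −2^{(p−1)/2}·(1 + √(1 − 2m^p)) is a p-th power of an element of the ring of integers of K = ℚ(√(1 − 2m^p)), then p divides the class number of K (indeed the ideal class group of K contains an element of order p). -/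
open Polynomial NumberField

/-- The element `√d` of `ℚ(√d)`. -/
noncomputable def sqrtElem (d : ℤ) : Qsqrt d :=
  ⟨sqrtC d, IntermediateField.mem_adjoin_simple_self ℚ (sqrtC d)⟩


open nonZeroDivisors

lemma exists_ideal_pow {R : Type*} [CommRing R] [IsDedekindDomain R] (θ : R) (m : ℤ)
    (hmodd : Odd m) (hm0 : (m : R) ≠ 0) (h20 : (2 : R) ≠ 0)
    (p : ℕ) (hpodd : Odd p) (hθ : θ ^ 2 = 1 - 2 * (m : R) ^ p) :
    ∃ B : Ideal R, B ≠ 0 ∧ B ^ p = Ideal.span {2 ^ ((p - 1) / 2) * (1 + θ)} := by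
  classical
  set P : Ideal R := Ideal.span {2, 1 + θ} with hP
  obtain ⟨k, hk⟩ := hmodd.pow (n := p)
  have hkR : (m : R) ^ p = 2 * k + 1 := by exact_mod_cast congrArg (Int.cast : ℤ → R) hk
  have h2P : (2 : R) ∈ P := Ideal.subset_span (by simp)
  have hαP : (1 + θ : R) ∈ P := Ideal.subset_span (by simp)
  have hβP : (1 - θ : R) ∈ P := by
    have : (1 - θ : R) = 2 - (1 + θ) := by ring
    rw [this]; exact P.sub_mem h2P hαP
  have hPP : P * P = Ideal.span {2} := by
    apply le_antisymm
    · rw [hP, Ideal.span_pair_mul_span_pair, Ideal.span_le]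
      have h1 : (1 + θ) * (1 + θ) = 2 * (1 + θ - (m : R) ^ p) := by linear_combination hθ
      rintro x (rfl | rfl | rfl | rfl)
      · exact Ideal.mem_span_singleton.2 (Dvd.intro _ rfl)
      · exact Ideal.mem_span_singleton.2 (Dvd.intro _ rfl)
      · exact Ideal.mem_span_singleton.2 (Dvd.intro_left _ rfl)
      · exact Ideal.mem_span_singleton.2 ⟨_, h1⟩
    · rw [Ideal.span_singleton_le_iff_mem]
      have : (2 : R) = 2 * (1 + θ) - (1 + θ) * (1 + θ) - k * (2 * 2) := by
        linear_combination hθ - 2 * hkR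
      rw [this]
      exact (P * P).sub_mem ((P * P).sub_mem (Ideal.mul_mem_mul h2P hαP)
        (Ideal.mul_mem_mul hαP hαP)) ((P * P).mul_mem_left _ (Ideal.mul_mem_mul h2P h2P))
  have hP0 : P ≠ 0 := by
    intro h
    rw [h] at h2P
    exact h20 (by simpa using h2P)
  obtain ⟨I, hI⟩ : P ∣ Ideal.span {1 + θ} :=
    Ideal.dvd_iff_le.2 ((Ideal.span_singleton_le_iff_mem _).2 hαP)
  obtain ⟨J, hJ⟩ : P ∣ Ideal.span {1 - θ} :=
    Ideal.dvd_iff_le.2 ((Ideal.span_singleton_le_iff_mem _).2 hβP)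
  have hIJ : I * J = Ideal.span {(m : R)} ^ p := by
    apply mul_left_cancel₀ (mul_ne_zero hP0 hP0)
    calc P * P * (I * J) = (P * I) * (P * J) := by ring
      _ = Ideal.span {2} * Ideal.span {(m : R)} ^ p := by
        rw [← hI, ← hJ, Ideal.span_singleton_mul_span_singleton, Ideal.span_singleton_pow,
          Ideal.span_singleton_mul_span_singleton]
        congr 2
        linear_combination -hθ
      _ = _ := by rw [hPP]
  have hcop : I ⊔ J = 1 := by
    apply mul_left_cancel₀ hP0
    rw [mul_one, Ideal.mul_sup, ← hI, ← hJ]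
    apply le_antisymm
    · exact sup_le ((Ideal.span_singleton_le_iff_mem _).2 hαP)
        ((Ideal.span_singleton_le_iff_mem _).2 hβP)
    · rw [hP, Ideal.span_le]
      have ha : (1 + θ) ∈ Ideal.span {1 + θ} ⊔ Ideal.span {1 - θ} :=
        Ideal.mem_sup_left (Ideal.mem_span_singleton_self _)
      have hb : (1 - θ) ∈ Ideal.span {1 + θ} ⊔ Ideal.span {1 - θ} :=
        Ideal.mem_sup_right (Ideal.mem_span_singleton_self _)
      rintro x (rfl | rfl)
      · have := Ideal.add_mem _ ha hb
        have h2 : (1 + θ) + (1 - θ) = (2 : R) := by ring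
        rwa [h2] at this
      · exact ha
  obtain ⟨A, hA⟩ := exists_eq_pow_of_mul_eq_pow_of_coprime
    (Ideal.isCoprime_iff_sup_eq.2 (hcop.trans Ideal.one_eq_top)) hIJ
  obtain ⟨q, hq⟩ := hpodd
  have hq' : (p - 1) / 2 = q := by omega
  have hA0 : A ≠ 0 := by
    rintro rfl
    rw [zero_pow (by omega)] at hA
    rw [hA, zero_mul] at hIJ
    have := pow_eq_zero_iff (n := p) (by omega) |>.1 hIJ.symm
    exact hm0 (by simpa using this)
  refine ⟨P * A, mul_ne_zero hP0 hA0, ?_⟩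
  rw [hq', ← Ideal.span_singleton_mul_span_singleton, hI, hA, ← Ideal.span_singleton_pow, ← hPP,
    hq]
  ring

lemma qsqrt_repr (d : ℤ) (x : ℂ) (hx : x ∈ Qsqrt d) : ∃ a b : ℚ, x = a + b * sqrtC d := by
  have hx' : x ∈ (Qsqrt d).toSubalgebra := hx
  rw [Qsqrt, IntermediateField.adjoin_simple_toSubalgebra_of_isAlgebraic
    (isIntegral_sqrtC d).isAlgebraic] at hx'
  clear hx
  induction hx' using Algebra.adjoin_induction with
  | mem x h => exact ⟨0, 1, by simp_all⟩
  | algebraMap r => exact ⟨r, 0, by simp⟩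
  | add x y _ _ h1 h2 =>
    obtain ⟨a, b, rfl⟩ := h1
    obtain ⟨a', b', rfl⟩ := h2
    exact ⟨a + a', b + b', by push_cast; ring⟩
  | mul x y _ _ h1 h2 =>
    obtain ⟨a, b, rfl⟩ := h1
    obtain ⟨a', b', rfl⟩ := h2
    refine ⟨a * a' + b * b' * d, a * b' + b * a', ?_⟩
    push_cast
    linear_combination (b * b' : ℂ) * sqrtC_sq d

lemma no_sqrt_neg_three (d : ℤ) (hd : d < 0) (hd4 : d % 4 = 3) (x : Qsqrt d) : x ^ 2 ≠ -3 := by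
  intro hx
  have hx' : (x : ℂ) ^ 2 = -3 := by
    have := congrArg (algebraMap (Qsqrt d) ℂ) hx
    rw [map_pow, map_neg, map_ofNat] at this
    exact this
  obtain ⟨a, b, hab⟩ := qsqrt_repr d x x.2
  have hs := sqrtC_sq d
  set s := sqrtC d
  rw [hab] at hx'
  have h1 : (2 * a * b : ℂ) * s = ((-3 - a ^ 2 - b ^ 2 * d : ℚ) : ℂ) := by
    push_cast
    linear_combination hx' - (b : ℂ) ^ 2 * hs
  have hab0 : a * b = 0 := by
    by_contra hne
    have h2 : ((2 * a * b) ^ 2 * d : ℚ) = (-3 - a ^ 2 - b ^ 2 * d : ℚ) ^ 2 := by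
      have : (((2 * a * b) ^ 2 * d : ℚ) : ℂ) = (((-3 - a ^ 2 - b ^ 2 * d : ℚ) ^ 2 : ℚ) : ℂ) := by
        rw [Rat.cast_pow, ← h1]
        push_cast
        linear_combination -((2 * a * b : ℂ) ^ 2) * hs
      exact_mod_cast this
    have h3 : (0 : ℚ) < (2 * a * b) ^ 2 := by
      have : 2 * a * b ≠ 0 := by rw [mul_assoc]; exact mul_ne_zero two_ne_zero hne
      positivity
    have h4 : (d : ℚ) < 0 := by exact_mod_cast hd
    nlinarith [sq_nonneg (-3 - a ^ 2 - b ^ 2 * d : ℚ)]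
  have h5 : (-3 - a ^ 2 - b ^ 2 * d : ℚ) = 0 := by
    have : ((-3 - a ^ 2 - b ^ 2 * d : ℚ) : ℂ) = 0 := by
      rw [← h1]
      have : (a * b : ℂ) = 0 := by exact_mod_cast hab0
      linear_combination 2 * s * this
    exact_mod_cast this
  rcases mul_eq_zero.1 hab0 with rfl | rfl
  · have h6 : b.num ^ 2 * d = -3 * (b.den : ℤ) ^ 2 := by
      have hden : (b.den : ℚ) ≠ 0 := by exact_mod_cast b.den_nz
      have h7 : b * b.den = b.num := Rat.mul_den_eq_num b
      have : (b.num : ℚ) ^ 2 * d = -3 * (b.den : ℚ) ^ 2 := by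
        rw [← h7]
        linear_combination -(b.den : ℚ) ^ 2 * h5
      exact_mod_cast this
    have hc : ¬ (Even b.num ∧ Even (b.den : ℤ)) := by
      rintro ⟨h1, h2⟩
      have h3 := b.reduced
      have h4 : 2 ∣ b.num.natAbs := Int.natCast_dvd.1 h1.two_dvd
      have h5 : 2 ∣ b.den := by exact_mod_cast h2.two_dvd
      have := Nat.dvd_gcd h4 h5
      rw [h3] at this
      omega
    have key : ∀ n e d : ZMod 4, n ^ 2 * d = -3 * e ^ 2 → d = 3 → 2 * n = 0 ∧ 2 * e = 0 := by
      decide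
    have hdz : (d : ZMod 4) = 3 := by
      have : (d : ZMod 4) = ((3 : ℤ) : ZMod 4) :=
        (ZMod.intCast_eq_intCast_iff _ _ 4).2 (by simpa [Int.ModEq] using hd4)
      simpa using this
    have h6z : (b.num : ZMod 4) ^ 2 * d = -3 * ((b.den : ℤ) : ZMod 4) ^ 2 := by
      exact_mod_cast congrArg (Int.cast : ℤ → ZMod 4) h6
    obtain ⟨k1, k2⟩ := key _ _ _ h6z hdz
    have k1' : ((2 * b.num : ℤ) : ZMod 4) = 0 := by push_cast; exact k1
    have k2' : ((2 * (b.den : ℤ) : ℤ) : ZMod 4) = 0 := by push_cast; exact_mod_cast k2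
    rw [ZMod.intCast_zmod_eq_zero_iff_dvd] at k1' k2'
    refine hc ⟨?_, ?_⟩ <;> rw [even_iff_two_dvd] <;> omega
  · nlinarith [sq_nonneg a]

lemma finrank_qsqrt_le (d : ℤ) : Module.finrank ℚ (Qsqrt d) ≤ 2 := by
  have h := IntermediateField.adjoin.finrank (isIntegral_sqrtC d)
  change Module.finrank ℚ (Qsqrt d) = _ at h
  rw [h]
  have hmonic : (X ^ 2 - C (d : ℚ)).Monic := monic_X_pow_sub_C _ two_ne_zero
  have := minpoly.min ℚ (sqrtC d) hmonic (by simp [sqrtC_sq])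
  have h2 := natDegree_le_natDegree this
  rwa [natDegree_X_pow_sub_C] at h2

lemma sqrtElem_sq (d : ℤ) : sqrtElem d ^ 2 = (d : Qsqrt d) := by
  apply Subtype.ext
  simpa [sqrtElem] using sqrtC_sq d

lemma unit_torsion (d : ℤ) (hd : d < 0) (u : (𝓞 (Qsqrt d))ˣ) :
    u ∈ NumberField.Units.torsion (Qsqrt d) := by
  classical
  have hr : InfinitePlace.nrRealPlaces (Qsqrt d) = 0 := by
    rw [InfinitePlace.nrRealPlaces, Fintype.card_eq_zero_iff]
    refine ⟨fun ⟨w, hw⟩ => ?_⟩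
    obtain ⟨φ, hφ, -⟩ := hw
    have h1 : (hφ.embedding (sqrtElem d)) ^ 2 = (d : ℝ) := by
      rw [← map_pow, sqrtElem_sq]; simp
    have h2 : (d : ℝ) < 0 := by exact_mod_cast hd
    nlinarith [sq_nonneg (hφ.embedding (sqrtElem d))]
  have h1 := InfinitePlace.card_add_two_mul_card_eq_rank (Qsqrt d)
  have h2 := InfinitePlace.card_eq_nrRealPlaces_add_nrComplexPlaces (Qsqrt d)
  have h3 := finrank_qsqrt_le d
  have hrank : NumberField.Units.rank (Qsqrt d) = 0 := by
    rw [NumberField.Units.rank]; omega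
  have : IsEmpty (Fin (NumberField.Units.rank (Qsqrt d))) := by rw [hrank]; infer_instance
  obtain ⟨⟨ζ, e⟩, h, -⟩ := NumberField.Units.exist_unique_eq_mul_prod (Qsqrt d) u
  simp only [Finset.univ_eq_empty, Finset.prod_empty, mul_one] at h
  rw [h]
  exact ζ.2

lemma coprime_torsion (d : ℤ) (hd : d < 0) (hd4 : d % 4 = 3) (p : ℕ) (hp : p.Prime)
    (hpodd : Odd p) : (Nat.card (NumberField.Units.torsion (Qsqrt d))).Coprime p := by
  rw [Nat.coprime_comm, hp.coprime_iff_not_dvd]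
  intro hdvd
  have := Fact.mk hp
  obtain ⟨g, hg⟩ := exists_prime_orderOf_dvd_card' p hdvd
  have hprim : IsPrimitiveRoot g p := hg ▸ IsPrimitiveRoot.orderOf g
  have hprim2 : IsPrimitiveRoot (((g : (𝓞 (Qsqrt d))ˣ) : 𝓞 (Qsqrt d)) : Qsqrt d) p := by
    have h1 := hprim.map_of_injective (f := (NumberField.Units.torsion (Qsqrt d)).subtype)
      Subtype.val_injective
    have h2 := h1.map_of_injective (f := Units.coeHom (𝓞 (Qsqrt d))) Units.val_injective
    exact h2.map_of_injective (f := algebraMap (𝓞 (Qsqrt d)) (Qsqrt d))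
      RingOfIntegers.coe_injective
  set ζ := (((g : (𝓞 (Qsqrt d))ˣ) : 𝓞 (Qsqrt d)) : Qsqrt d)
  have htot : p.totient ≤ 2 := by
    have h1 := hprim2.totient_le_degree_minpoly
    have hint : IsIntegral ℤ ζ := hprim2.isIntegral hp.pos
    have h2 : (minpoly ℚ ζ).natDegree = (minpoly ℤ ζ).natDegree := by
      rw [minpoly.isIntegrallyClosed_eq_field_fractions' ℚ hint]
      exact (minpoly.monic hint).natDegree_map _
    have h3 := minpoly.natDegree_le (A := ℚ) ζ
    have h4 := finrank_qsqrt_le d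
    omega
  rw [Nat.totient_prime hp] at htot
  have hp2 := hp.two_le
  have hp3 : p = 3 := by
    obtain ⟨q, hq⟩ := hpodd
    omega
  subst hp3
  have hz3 := hprim2.pow_eq_one
  have hz1 : ζ ≠ 1 := hprim2.ne_one (by norm_num)
  have h0 : ζ ^ 2 + ζ + 1 = 0 := by
    apply mul_left_cancel₀ (sub_ne_zero.2 hz1)
    linear_combination hz3
  exact no_sqrt_neg_three d hd hd4 (2 * ζ + 1) (by linear_combination 4 * h0)

lemma unit_eq_pow (d : ℤ) (hd : d < 0) (hd4 : d % 4 = 3) (p : ℕ) (hp : p.Prime)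
    (hpodd : Odd p) (u : (𝓞 (Qsqrt d))ˣ) : ∃ v : (𝓞 (Qsqrt d))ˣ, v ^ p = u := by
  obtain ⟨v, hv⟩ := (powCoprime (coprime_torsion d hd hd4 p hp hpodd)).surjective
    ⟨u, unit_torsion d hd u⟩
  exact ⟨v, congrArg Subtype.val hv⟩

/-- Let `m ≥ 3` be odd and `p` an odd prime. If neither
`2 ^ ((p-1)/2) (1 + √(1 - 2 m ^ p))` nor its negative is a `p`-th power of an element of the
ring of integers of `K = ℚ(√(1 - 2 m ^ p))`, then `p` divides the class number of `K`;
indeed the ideal class group of `K` contains an element of order `p`. -/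
theorem p_dvd_classNumber_of_not_pth_power
    (m : ℤ) (hm : 3 ≤ m) (hmodd : Odd m)
    (p : ℕ) (hp : p.Prime) (hpodd : Odd p)
    (hnot : ¬ ∃ β : 𝓞 (Qsqrt (1 - 2 * m ^ p)),
        (β : Qsqrt (1 - 2 * m ^ p)) ^ p =
            2 ^ ((p - 1) / 2) * (1 + sqrtElem (1 - 2 * m ^ p)) ∨
        (β : Qsqrt (1 - 2 * m ^ p)) ^ p =
            -(2 ^ ((p - 1) / 2) * (1 + sqrtElem (1 - 2 * m ^ p)))) :
    p ∣ NumberField.classNumber (Qsqrt (1 - 2 * m ^ p)) ∧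
    ∃ c : ClassGroup (𝓞 (Qsqrt (1 - 2 * m ^ p))), orderOf c = p := by
  have hmp : m ^ p % 2 = 1 := Int.odd_iff.1 hmodd.pow
  have hmpos : 0 < m ^ p := by positivity
  have hd : 1 - 2 * m ^ p < 0 := by omega
  have hd4 : (1 - 2 * m ^ p) % 4 = 3 := by omega
  have hcast : ((1 - 2 * m ^ p : ℤ) : Qsqrt (1 - 2 * m ^ p)) =
      1 - 2 * (m : Qsqrt (1 - 2 * m ^ p)) ^ p := by push_cast; rfl
  generalize 1 - 2 * m ^ p = d at *
  have hsq := sqrtElem_sq d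
  rw [hcast] at hsq
  have hint : IsIntegral ℤ (sqrtElem d) := by
    apply IsIntegral.of_pow (n := 2) two_pos
    rw [sqrtElem_sq]
    exact isIntegral_algebraMap (R := ℤ) (x := d)
  let θ : 𝓞 (Qsqrt d) := ⟨sqrtElem d, hint⟩
  have hθc : (θ : Qsqrt d) = sqrtElem d := rfl
  have hθ : θ ^ 2 = 1 - 2 * (m : 𝓞 (Qsqrt d)) ^ p := by
    apply RingOfIntegers.coe_injective
    simp only [map_pow, map_sub, map_mul, map_one, map_ofNat, map_intCast]
    exact hsq
  obtain ⟨B, hB0, hB⟩ := exists_ideal_pow θ m hmodd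
    (by exact_mod_cast (by omega : m ≠ 0)) two_ne_zero p hpodd hθ
  have hBmem : B ∈ (Ideal (𝓞 (Qsqrt d)))⁰ := mem_nonZeroDivisors_of_ne_zero hB0
  have hord : orderOf (ClassGroup.mk0 ⟨B, hBmem⟩) = p := by
    have := Fact.mk hp
    apply orderOf_eq_prime
    · rw [← map_pow]
      rw [show (⟨B, hBmem⟩ : (Ideal (𝓞 (Qsqrt d)))⁰) ^ p = ⟨B ^ p, pow_mem hBmem p⟩ from rfl,
        ClassGroup.mk0_eq_one_iff]
      exact ⟨⟨_, hB⟩⟩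
    · intro h1
      rw [ClassGroup.mk0_eq_one_iff] at h1
      obtain ⟨⟨γ, hγ⟩⟩ := h1
      have hγ' : B = Ideal.span {γ} := hγ
      rw [hγ', Ideal.span_singleton_pow, Ideal.span_singleton_eq_span_singleton] at hB
      obtain ⟨u, hu⟩ := hB
      obtain ⟨v, rfl⟩ := unit_eq_pow d hd hd4 p hp hpodd u
      refine hnot ⟨γ * v, Or.inl ?_⟩
      have := congrArg (algebraMap (𝓞 (Qsqrt d)) (Qsqrt d)) hu
      simp only [map_pow, map_add, map_mul, map_one, map_ofNat, Units.val_pow_eq_pow_val] at this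
      change (algebraMap (𝓞 (Qsqrt d)) (Qsqrt d) (γ * v)) ^ p = _
      rw [map_mul, mul_pow]
      exact this
  refine ⟨?_, _, hord⟩
  rw [← hord]
  exact orderOf_dvd_card
end
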